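/- The restriction of f to W is a semisimple endomorphism of W (every f-invariant subspace of W has an f-invariant complement in W; equivalently, f|_W is diagonalizable). Moreover W is the sum of the eigenspaces of f for the eigenvalues of the form ζc with ζ ∈ K a root of unity: W = ∑_{ζ root of unity} ker(f − ζc·id). -/

import Mathlib

/-!
Every `x ∈ W` is annihilated by a polynomial `Xⁿ - cⁿ` in `f`, which is separable since `c ≠ 0` and
the characteristic is zero. So `x` generates a quotient of the `K[X]`-module `K[X] / (Xⁿ - cⁿ)`,
which is semisimple because it is a reduced Artinian ring, and `W` is a sum of such cyclic modules.
If `K` contains a primitive `n`-th root of unity, then `Xⁿ - cⁿ` is the product of the pairwise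
coprime factors `X - ζc` with `ζⁿ = 1`, and `ker (fⁿ - cⁿ)` decomposes accordingly.
-/

open Polynomial Module.End
open scoped nonZeroDivisors

section IsSemisimpleModule

variable {R M : Type*} [CommRing R] [IsNoetherianRing R] [Ring.KrullDimLE 1 R]
  [AddCommGroup M] [Module R M]

lemma isSemisimpleModule_quotient_span_singleton {a : R} (ha : a ∈ R⁰) (ha' : IsRadical a) :
    IsSemisimpleModule R (R ⧸ Ideal.span {a}) := by
  have : IsReduced (R ⧸ Ideal.span {a}) :=
    (Ideal.isRadical_iff_quotient_reduced _).mp (isRadical_iff_span_singleton.mp ha')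
  have : IsArtinian R (R ⧸ Ideal.span {a}) :=
    (isFiniteLength_iff_isNoetherian_isArtinian.mp
      (isFiniteLength_quotient_span_singleton R ha)).2
  have : IsArtinianRing (R ⧸ Ideal.span {a}) := isArtinian_of_tower R inferInstance
  let e : (R ⧸ Ideal.span {a}) →ₛₗ[Ideal.Quotient.mk (Ideal.span {a})] R ⧸ Ideal.span {a} :=
    { AddMonoidHom.id _ with map_smul' := fun _ _ ↦ rfl }
  exact (e.isSemisimpleModule_iff_of_bijective Function.bijective_id).mpr
    (IsArtinianRing.isSemisimpleRing_of_isReduced _)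

lemma isSemisimpleModule_of_forall_exists_isRadical_smul_eq_zero
    (h : ∀ m : M, ∃ a ∈ R⁰, IsRadical a ∧ a • m = 0) : IsSemisimpleModule R M := by
  refine isSemisimpleModule_of_isSemisimpleModule_submodule' (p := fun m : M ↦ R ∙ m)
    (fun m ↦ ?_) ?_
  · obtain ⟨a, ha, ha', ham⟩ := h m
    have := isSemisimpleModule_quotient_span_singleton ha ha'
    have hle : Ideal.span {a} ≤ LinearMap.ker (LinearMap.toSpanSingleton R M m) := by
      simpa [Ideal.span_le] using ham
    rw [LinearMap.span_singleton_eq_range, ← Submodule.range_liftQ _ _ hle]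
    exact .range _
  · exact eq_top_iff.mpr fun m _ ↦ Submodule.mem_iSup_of_mem m (Submodule.mem_span_singleton_self m)

end IsSemisimpleModule

lemma aeval_X_pow_sub_C {R A : Type*} [CommRing R] [Ring A] [Algebra R A] (x : A) (n : ℕ) (a : R) :
    aeval x (X ^ n - C a) = x ^ n - a • 1 := by
  rw [map_sub, map_pow, aeval_X, aeval_C, Algebra.algebraMap_eq_smul_one]

section VectorSpace

variable {K V : Type*} [Field K] [AddCommGroup V] [Module K V]

lemma isSemisimple_of_forall_exists_squarefree_aeval_apply_eq_zero {f : Module.End K V}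
    (h : ∀ x, ∃ p : K[X], Squarefree p ∧ aeval f p x = 0) : f.IsSemisimple :=
  isSemisimpleModule_of_forall_exists_isRadical_smul_eq_zero (M := Module.AEval' f) fun x ↦
    let ⟨p, hp, hpx⟩ := h x
    ⟨p, mem_nonZeroDivisors_of_ne_zero hp.ne_zero, hp.isRadical, hpx⟩

lemma isSemisimple_of_forall_exists_pow_apply_eq_smul {f : Module.End K V}
    (h : ∀ x, ∃ n : ℕ, (n : K) ≠ 0 ∧ ∃ a : K, a ≠ 0 ∧ (f ^ n) x = a • x) : f.IsSemisimple := by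
  refine isSemisimple_of_forall_exists_squarefree_aeval_apply_eq_zero fun x ↦ ?_
  obtain ⟨n, hn, a, ha, hx⟩ := h x
  refine ⟨X ^ n - C a, (separable_X_pow_sub_C a hn ha).squarefree, ?_⟩
  simp only [aeval_X_pow_sub_C, LinearMap.sub_apply, LinearMap.smul_apply, one_apply, hx, sub_self]

lemma ker_aeval_prod_X_sub_C_eq_iSup_eigenspace {ι : Type*} (f : Module.End K V) {s : Finset ι}
    {a : ι → K} (ha : Set.InjOn a s) :
    LinearMap.ker (aeval f (∏ i ∈ s, (X - C (a i)))) = ⨆ i ∈ s, eigenspace f (a i) := by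
  classical
  induction s using Finset.induction_on with
  | empty => simp [Module.End.one_eq_id]
  | insert i s hi ih =>
    rw [Finset.coe_insert, Set.injOn_insert hi] at ha
    have hcoprime : IsCoprime (X - C (a i)) (∏ j ∈ s, (X - C (a j))) :=
      .prod_right fun j hj ↦ isCoprime_X_sub_C_of_isUnit_sub
        (sub_ne_zero.mpr fun h ↦ ha.2 ⟨j, hj, h.symm⟩).isUnit
    have hker : LinearMap.ker (aeval f (X - C (a i))) = eigenspace f (a i) := by
      simp [eigenspace_def, Algebra.algebraMap_eq_smul_one]
    rw [Finset.prod_insert hi, ← sup_ker_aeval_eq_ker_aeval_mul_of_coprime f hcoprime, hker,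
      ih ha.1, Finset.iSup_insert]

lemma eigenspace_pow_eq_iSup_eigenspace (f : Module.End K V) {n : ℕ} (hn : 0 < n) {ζ c : K}
    (hζ : IsPrimitiveRoot ζ n) (hc : c ≠ 0) :
    eigenspace (f ^ n) (c ^ n) = ⨆ i ∈ Finset.range n, eigenspace f (ζ ^ i * c) := by
  have hinj : Set.InjOn (fun i ↦ ζ ^ i * c) (Finset.range n) := fun i hi j hj h ↦
    hζ.pow_inj (Finset.mem_range.mp hi) (Finset.mem_range.mp hj) (mul_right_cancel₀ hc h)
  rw [← ker_aeval_prod_X_sub_C_eq_iSup_eigenspace f hinj, ← X_pow_sub_C_eq_prod hζ hn rfl,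
    aeval_X_pow_sub_C, eigenspace_def]

lemma eigenspace_le_eigenspace_pow {R M : Type*} [CommRing R] [AddCommGroup M] [Module R M]
    (f : Module.End R M) (μ : R) (n : ℕ) : eigenspace f μ ≤ eigenspace (f ^ n) (μ ^ n) := by
  intro x hx
  simpa [mem_eigenspace_iff] using
    aeval_apply_of_mem_apply_eq_smul (p := X ^ n) (mem_eigenspace_iff.mp hx)

theorem isSemisimple_restrict_and_eq_sup_eigenspaces_general [CharZero K] (f : V →ₗ[K] V) {c : K}
    (hc : c ≠ 0) {W : Submodule K V}
    (hW : (W : Set V) = {x : V | ∃ n : ℕ, 1 ≤ n ∧ (f ^ n) x = c ^ n • x})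
    (hfW : ∀ x ∈ W, f x ∈ W) :
    Module.End.IsSemisimple (LinearMap.restrict f hfW) ∧
    ((∀ n : ℕ, 1 ≤ n → ∃ ζ : K, IsPrimitiveRoot ζ n) →
      W = ⨆ ζ ∈ {ζ : K | ∃ m : ℕ, 1 ≤ m ∧ ζ ^ m = 1}, Module.End.eigenspace f (ζ * c)) := by
  have mem_W {x : V} : x ∈ W ↔ ∃ n : ℕ, 1 ≤ n ∧ (f ^ n) x = c ^ n • x := Set.ext_iff.mp hW x
  refine ⟨isSemisimple_of_forall_exists_pow_apply_eq_smul fun x ↦ ?_,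
    fun hK ↦ le_antisymm (fun x hx ↦ ?_) (iSup₂_le fun ζ ⟨m, hm, hζ⟩ x hx ↦ ?_)⟩
  · obtain ⟨n, hn, hx⟩ := mem_W.mp x.2
    refine ⟨n, Nat.cast_ne_zero.mpr (by lia), c ^ n, pow_ne_zero n hc, Subtype.ext ?_⟩
    rwa [pow_restrict]
  · obtain ⟨n, hn, hx⟩ := mem_W.mp hx
    obtain ⟨ζ, hζ⟩ := hK n hn
    have hx' : x ∈ ⨆ i ∈ Finset.range n, eigenspace f (ζ ^ i * c) :=
      eigenspace_pow_eq_iSup_eigenspace f hn hζ hc ▸ mem_eigenspace_iff.mpr hx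
    have hpow (i : ℕ) : (ζ ^ i) ^ n = 1 := by rw [pow_right_comm, hζ.pow_eq_one, one_pow]
    exact SetLike.le_def.mp (iSup₂_mono' fun i _ ↦ ⟨ζ ^ i, ⟨n, hn, hpow i⟩, le_rfl⟩) hx'
  · have hxm := eigenspace_le_eigenspace_pow f _ m hx
    rw [mul_pow, hζ, one_mul, mem_eigenspace_iff] at hxm
    exact mem_W.mpr ⟨m, hm, hxm⟩

end VectorSpace

/-- Let `K` be an algebraically closed field of characteristic zero, `V` a
finite-dimensional `K`-vector space, `f` an endomorphism of `V` and `c ≠ 0` a scalar.  Let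
`W = {x : ∃ n ≥ 1, fⁿ x = cⁿ x}`, an `f`-invariant subspace.  Then the restriction of `f`
to `W` is a semisimple endomorphism of `W` (equivalently, diagonalizable), and `W` is the
sum of the eigenspaces of `f` for the eigenvalues `ζ·c` with `ζ` a root of unity. -/
theorem isSemisimple_restrict_and_eq_sup_eigenspaces (K : Type*) [Field K] [IsAlgClosed K]
    [CharZero K] (V : Type*) [AddCommGroup V] [Module K V] [FiniteDimensional K V]
    (f : V →ₗ[K] V) (c : K) (hc : c ≠ 0) (W : Submodule K V)
    (hW : (W : Set V) = {x : V | ∃ n : ℕ, 1 ≤ n ∧ (f ^ n) x = c ^ n • x})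
    (hfW : ∀ x ∈ W, f x ∈ W) :
    Module.End.IsSemisimple (LinearMap.restrict f hfW) ∧
    W = ⨆ ζ ∈ {ζ : K | ∃ m : ℕ, 1 ≤ m ∧ ζ ^ m = 1},
          Module.End.eigenspace f (ζ * c) :=
  (isSemisimple_restrict_and_eq_sup_eigenspaces_general f hc hW hfW).imp_right fun h ↦
    h fun n hn ↦
      have : NeZero n := ⟨by lia⟩
      HasEnoughRootsOfUnity.exists_primitiveRoot K n
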